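/- Let A be a real n×n matrix with largest singular value σ_max(A) > 1, and let W and Q be real n×n positive semidefinite symmetric matrices. Then for every m ∈ ℕ, the largest eigenvalue of A^m W (Aᵀ)^m + ∑_{i=0}^{m−1} A^i Q (Aᵀ)^i is at most σ_max(A)^{2m}·(λ_max(W) + λ_max(Q)/(σ_max(A)² − 1)), where λ_max denotes the largest eigenvalue of a symmetric matrix. -/

import Mathlib

open Matrix

noncomputable def matEigs {n : ℕ} (M : Matrix (Fin n) (Fin n) ℝ) : Fin n → ℝ := by
  classical exact if h : M.IsHermitian then h.eigenvalues else 0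

noncomputable def matSqrt {n : ℕ} (M : Matrix (Fin n) (Fin n) ℝ) :
    Matrix (Fin n) (Fin n) ℝ := by
  classical exact if h : M.PosSemidef then
    (h.1.eigenvectorUnitary : Matrix (Fin n) (Fin n) ℝ) *
      diagonal (Real.sqrt ∘ h.1.eigenvalues) *
      (star h.1.eigenvectorUnitary : Matrix (Fin n) (Fin n) ℝ) else 0

/-- The natural (Fisher / affine-invariant) distance on positive definite
matrices: `d(P₁,P₂) = (∑ᵢ (log λᵢ)²)^{1/2}` where `λᵢ` are the eigenvalues of
`P₂^{-1/2} P₁ P₂^{-1/2}`. -/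
noncomputable def natDist {n : ℕ} (P₁ P₂ : Matrix (Fin n) (Fin n) ℝ) : ℝ :=
  Real.sqrt (∑ i : Fin n,
    Real.log (matEigs ((matSqrt P₂)⁻¹ * P₁ * (matSqrt P₂)⁻¹) i) ^ 2)

/-- The largest eigenvalue of a (Hermitian) matrix. -/
noncomputable def lambdaMax {n : ℕ} [NeZero n] (M : Matrix (Fin n) (Fin n) ℝ) : ℝ :=
  Finset.univ.sup' Finset.univ_nonempty (matEigs M)

/-- The largest singular value of a real square matrix, `σ_max(A) = √λ_max(AᵀA)`. -/
noncomputable def sigmaMax {n : ℕ} [NeZero n] (A : Matrix (Fin n) (Fin n) ℝ) : ℝ :=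
  Real.sqrt (lambdaMax (Aᵀ * A))

theorem matEigs_eq {n : ℕ} (M : Matrix (Fin n) (Fin n) ℝ) (h : M.IsHermitian) :
    matEigs M = h.eigenvalues := by
  unfold matEigs
  exact dif_pos h

theorem lm_rayleigh {n : ℕ} [NeZero n] (M : Matrix (Fin n) (Fin n) ℝ) (h : M.IsHermitian)
    (x : Fin n → ℝ) : x ⬝ᵥ M *ᵥ x ≤ lambdaMax M * (x ⬝ᵥ x) := by
  have hle : ∀ i, h.eigenvalues i ≤ lambdaMax M := by
    intro i
    have := Finset.le_sup' (matEigs M) (Finset.mem_univ i)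
    rw [matEigs_eq M h] at this
    rw [lambdaMax, matEigs_eq M h]
    exact this
  obtain ⟨U, hU, hM⟩ : ∃ U : Matrix (Fin n) (Fin n) ℝ, U * Uᵀ = 1 ∧
      M = U * diagonal h.eigenvalues * Uᵀ := by
    refine ⟨h.eigenvectorUnitary, ?_, ?_⟩
    · have := Unitary.coe_mul_star_self h.eigenvectorUnitary
      simpa [star_eq_conjTranspose] using this
    · have := h.spectral_theorem
      simpa [Unitary.conjStarAlgAut_apply, star_eq_conjTranspose, Function.comp_def] using this
  have e1 : x ⬝ᵥ M *ᵥ x = ∑ i, h.eigenvalues i * ((Uᵀ *ᵥ x) i) ^ 2 := by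
    conv_lhs => rw [hM]
    rw [← mulVec_mulVec, ← mulVec_mulVec, dotProduct_mulVec, ← mulVec_transpose]
    simp only [dotProduct, mulVec_diagonal]
    exact Finset.sum_congr rfl fun i _ => by ring
  have e2 : x ⬝ᵥ x = ∑ i, ((Uᵀ *ᵥ x) i) ^ 2 := by
    have : x ⬝ᵥ x = x ⬝ᵥ (U * Uᵀ) *ᵥ x := by rw [hU, one_mulVec]
    rw [this, ← mulVec_mulVec, dotProduct_mulVec, ← mulVec_transpose]
    simp only [dotProduct]
    exact Finset.sum_congr rfl fun i _ => by ring
  rw [e1, e2, Finset.mul_sum]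
  exact Finset.sum_le_sum fun i _ => mul_le_mul_of_nonneg_right (hle i) (sq_nonneg _)

theorem lm_le {n : ℕ} [NeZero n] (M : Matrix (Fin n) (Fin n) ℝ) (h : M.IsHermitian) (c : ℝ)
    (hc : ∀ x : Fin n → ℝ, x ⬝ᵥ M *ᵥ x ≤ c * (x ⬝ᵥ x)) : lambdaMax M ≤ c := by
  refine Finset.sup'_le _ _ fun i _ => ?_
  have h1 : matEigs M i = h.eigenvalues i := by rw [matEigs_eq M h]
  rw [h1]
  have h2 := hc (h.eigenvectorBasis i).ofLp
  rw [h.mulVec_eigenvectorBasis, dotProduct_smul, smul_eq_mul] at h2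
  have hne : (h.eigenvectorBasis i).ofLp ≠ 0 := by
    intro h0
    have h3 := h.eigenvectorBasis.orthonormal.ne_zero i
    exact h3 (by ext j; exact congrFun h0 j)
  have hpos : 0 < (h.eigenvectorBasis i).ofLp ⬝ᵥ (h.eigenvectorBasis i).ofLp :=
    lt_of_le_of_ne (Finset.sum_nonneg fun j _ => mul_self_nonneg _)
      (fun h0 => hne (dotProduct_self_eq_zero.1 h0.symm))
  exact le_of_mul_le_mul_right h2 hpos

theorem dp_nonneg {n : ℕ} (x : Fin n → ℝ) : 0 ≤ x ⬝ᵥ x :=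
  Finset.sum_nonneg fun j _ => mul_self_nonneg _

theorem lm_nonneg {n : ℕ} [NeZero n] (M : Matrix (Fin n) (Fin n) ℝ) (h : M.PosSemidef) :
    0 ≤ lambdaMax M := by
  have := Finset.le_sup' (matEigs M) (Finset.mem_univ 0)
  refine le_trans ?_ this
  have h1 : matEigs M 0 = h.1.eigenvalues 0 := by rw [matEigs_eq M h.1]
  rw [h1]
  exact h.eigenvalues_nonneg 0

theorem sig_bound {n : ℕ} [NeZero n] (A : Matrix (Fin n) (Fin n) ℝ) (x : Fin n → ℝ) :
    (Aᵀ *ᵥ x) ⬝ᵥ (Aᵀ *ᵥ x) ≤ sigmaMax A ^ 2 * (x ⬝ᵥ x) := by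
  have hps : (Aᵀ * A).PosSemidef := by
    simpa using posSemidef_conjTranspose_mul_self A
  have hs : sigmaMax A ^ 2 = lambdaMax (Aᵀ * A) := Real.sq_sqrt (lm_nonneg _ hps)
  have hB : ∀ y : Fin n → ℝ, (A *ᵥ y) ⬝ᵥ (A *ᵥ y) ≤ sigmaMax A ^ 2 * (y ⬝ᵥ y) := by
    intro y
    have := lm_rayleigh _ hps.1 y
    rw [← mulVec_mulVec, dotProduct_mulVec, ← mulVec_transpose, transpose_transpose] at this
    rw [hs]; exact this
  set y := Aᵀ *ᵥ x with hy
  have h1 : y ⬝ᵥ y = x ⬝ᵥ (A *ᵥ y) := by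
    rw [dotProduct_mulVec x A y, ← mulVec_transpose]
  have h2 : (x ⬝ᵥ (A *ᵥ y)) ^ 2 ≤ (x ⬝ᵥ x) * ((A *ᵥ y) ⬝ᵥ (A *ᵥ y)) := by
    have := Finset.sum_mul_sq_le_sq_mul_sq Finset.univ x (A *ᵥ y)
    simpa [dotProduct, sq] using this
  have h3 := mul_le_mul_of_nonneg_left (hB y) (dp_nonneg x)
  rcases (dp_nonneg y).eq_or_lt with h0 | h0
  · rw [← h0]; exact mul_nonneg (sq_nonneg _) (dp_nonneg x)
  · rw [← h1] at h2
    refine le_of_mul_le_mul_right ?_ h0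
    nlinarith

theorem sig_pow {n : ℕ} [NeZero n] (A : Matrix (Fin n) (Fin n) ℝ) (i : ℕ) (x : Fin n → ℝ) :
    (Aᵀ ^ i *ᵥ x) ⬝ᵥ (Aᵀ ^ i *ᵥ x) ≤ (sigmaMax A ^ 2) ^ i * (x ⬝ᵥ x) := by
  induction i with
  | zero => simp
  | succ k ih =>
    rw [pow_succ', ← mulVec_mulVec, pow_succ', mul_assoc]
    exact (sig_bound A _).trans (mul_le_mul_of_nonneg_left ih (sq_nonneg _))

theorem conj_bound {n : ℕ} [NeZero n] (A P : Matrix (Fin n) (Fin n) ℝ) (hP : P.PosSemidef)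
    (i : ℕ) (x : Fin n → ℝ) :
    x ⬝ᵥ (A ^ i * P * Aᵀ ^ i) *ᵥ x ≤ lambdaMax P * (sigmaMax A ^ 2) ^ i * (x ⬝ᵥ x) := by
  rw [← mulVec_mulVec, ← mulVec_mulVec, dotProduct_mulVec, ← mulVec_transpose, transpose_pow,
    mul_assoc]
  exact (lm_rayleigh P hP.1 _).trans (mul_le_mul_of_nonneg_left (sig_pow A i x) (lm_nonneg P hP))

theorem conj_herm {n : ℕ} (A P : Matrix (Fin n) (Fin n) ℝ) (hP : P.PosSemidef) (i : ℕ) :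
    (A ^ i * P * Aᵀ ^ i).PosSemidef := by
  have := hP.mul_mul_conjTranspose_same (A ^ i)
  simpa [transpose_pow] using this

/-- If `σ_max(A) > 1` and `W`, `Q` are positive semidefinite,
then for every `m`,
`λ_max(Aᵐ W (Aᵀ)ᵐ + ∑_{i<m} Aⁱ Q (Aᵀ)ⁱ) ≤ σ_max(A)^{2m}·(λ_max(W) + λ_max(Q)/(σ_max(A)² − 1))`. -/
theorem lambdaMax_pessimist_bound
    {n : ℕ} [NeZero n] (A W Q : Matrix (Fin n) (Fin n) ℝ)
    (hW : W.PosSemidef) (hQ : Q.PosSemidef) (hA : 1 < sigmaMax A) (m : ℕ) :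
    lambdaMax (A ^ m * W * Aᵀ ^ m + ∑ i ∈ Finset.range m, A ^ i * Q * Aᵀ ^ i)
      ≤ sigmaMax A ^ (2 * m) * (lambdaMax W + lambdaMax Q / (sigmaMax A ^ 2 - 1)) := by
  refine lm_le _ ?_ _ fun x => ?_
  · exact ((conj_herm A W hW m).add
      (posSemidef_sum _ fun i _ => conj_herm A Q hQ i)).1
  · have hs : 1 < sigmaMax A ^ 2 := by nlinarith
    rw [add_mulVec, dotProduct_add, sum_mulVec, dotProduct_sum, pow_mul]
    have h1 := conj_bound A W hW m x
    have h2 := Finset.sum_le_sum fun i (_ : i ∈ Finset.range m) => conj_bound A Q hQ i x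
    rw [← Finset.sum_mul, ← Finset.mul_sum, geom_sum_eq hs.ne'] at h2
    have hq := lm_nonneg Q hQ
    have h3 : lambdaMax Q * (((sigmaMax A ^ 2) ^ m - 1) / (sigmaMax A ^ 2 - 1)) ≤
        (sigmaMax A ^ 2) ^ m * (lambdaMax Q / (sigmaMax A ^ 2 - 1)) := by
      have : 0 ≤ lambdaMax Q / (sigmaMax A ^ 2 - 1) := div_nonneg hq (by linarith)
      have e : lambdaMax Q * (((sigmaMax A ^ 2) ^ m - 1) / (sigmaMax A ^ 2 - 1)) =
        ((sigmaMax A ^ 2) ^ m - 1) * (lambdaMax Q / (sigmaMax A ^ 2 - 1)) := by ring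
      rw [e]; nlinarith
    have h4 := mul_le_mul_of_nonneg_right h3 (dp_nonneg x)
    nlinarith
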